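/- The hyperelliptic Rauzy–Veech group G_d, generated by the operators L_p, equals the group of all B ∈ SL(ℤ^{A_d}) satisfying B Ω B^T = Ω whose mod-2 reduction preserves the set E = {ē*} ∪ {ē_p : p ∈ A_d}. -/

import Mathlib

open Matrix

/-- The antisymmetric matrix `Ω` with `Ω p q = sign (q - p)`. -/
def Omega (d : ℕ) : Matrix (Fin d) (Fin d) ℤ :=
  Matrix.of fun p q => if p < q then 1 else if q < p then -1 else 0

/-- The matrix of the operator `L_p`. -/
def L (d : ℕ) (p : Fin d) : Matrix (Fin d) (Fin d) ℤ :=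
  Matrix.of fun r q => if q = p then (if r < p then -1 else 1) else (if r = q then 1 else 0)

/-- The hyperelliptic Rauzy–Veech group `G_d`, generated by the operators `L_p`. -/
def Gd (d : ℕ) : Subgroup (Matrix (Fin d) (Fin d) ℤ)ˣ :=
  Subgroup.closure {u : (Matrix (Fin d) (Fin d) ℤ)ˣ |
    ∃ p : Fin d, (u : Matrix (Fin d) (Fin d) ℤ) = L d p}

/-- The set `E = {ē*} ∪ {ē_p : p ∈ A_d}` in `(ℤ/2)^{A_d}`. -/
def Eset (d : ℕ) : Set (Fin d → ZMod 2) :=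
  insert (fun _ => 1) (Set.range fun p : Fin d => Pi.single p (1 : ZMod 2))


namespace GdProof

section abstract_part
variable {R V : Type*} [CommRing R] [AddCommGroup V] [Module R V]

/-- Powers of the symplectic transvection along `v`. -/
def T (ω : V →ₗ[R] V →ₗ[R] R) (hω : ∀ x, ω x x = 0) (v : V) (n : R) : V ≃ₗ[R] V :=
  LinearEquiv.ofLinearMap (LinearMap.id + n • (ω v).smulRight v) (LinearMap.id - n • (ω v).smulRight v)
    (by ext x; simp [hω]) (by ext x; simp [hω])

variable (ω : V →ₗ[R] V →ₗ[R] R) (hω : ∀ x, ω x x = 0)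

lemma T_apply (v : V) (n : R) (x : V) : T ω hω v n x = x + (n * ω v x) • v := by
  simp [T, mul_smul]

lemma T_inv_apply (v : V) (n : R) (x : V) : (T ω hω v n)⁻¹ x = x - (n * ω v x) • v := by
  change (T ω hω v n).symm x = _
  simp [T, mul_smul]

lemma om_swap (ω : V →ₗ[R] V →ₗ[R] R) (hω : ∀ x, ω x x = 0) (x y : V) : ω x y = - ω y x := by
  have h := hω (x + y)
  simp only [map_add, LinearMap.add_apply, hω] at h
  linear_combination h

lemma T_mul (v : V) (m n : R) : T ω hω v m * T ω hω v n = T ω hω v (m + n) := by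
  ext x
  simp only [LinearEquiv.mul_apply, T_apply, map_add, map_smul, hω, smul_eq_mul]
  module

lemma T_inv (v : V) (m : R) : (T ω hω v m)⁻¹ = T ω hω v (-m) := by
  ext x
  simp only [T_apply, T_inv_apply]
  module

lemma T_isom (v : V) (n : R) (x y : V) : ω (T ω hω v n x) (T ω hω v n y) = ω x y := by
  simp only [T_apply, map_add, map_smul, LinearMap.add_apply, LinearMap.smul_apply, smul_eq_mul, hω]
  rw [om_swap ω hω x v]
  ring

lemma chain (N : Subgroup (V ≃ₗ[R] V)) (a b c : V) (hab : ω a b = 1) (hac : ω a c = 1)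
    (hbc : ω b c = 1)
    (h1 : T ω hω a 2 ∈ N) (h2 : T ω hω b 2 ∈ N) (h3 : T ω hω c 2 ∈ N)
    (h4 : T ω hω (a - b) 2 ∈ N) (h5 : T ω hω (a - c) 2 ∈ N) (h6 : T ω hω (b - c) 2 ∈ N) :
    T ω hω (a - b + c) 2 ∈ N := by
  have hba : ω b a = -1 := by rw [om_swap ω hω, hab]
  have hca : ω c a = -1 := by rw [om_swap ω hω, hac]
  have hcb : ω c b = -1 := by rw [om_swap ω hω, hbc]
  have : T ω hω (a - b + c) 2 = T ω hω a 2 * T ω hω (a - b) 2 * T ω hω b 2 *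
      T ω hω (b - c) 2 * T ω hω (a - c) 2 * T ω hω c 2 := by
    ext x
    simp only [LinearEquiv.mul_apply, T_apply, map_add, map_sub, map_smul, LinearMap.add_apply,
      LinearMap.sub_apply, smul_eq_mul, hω, hab, hac, hbc, hba, hca, hcb]
    module
  rw [this]
  exact N.mul_mem (N.mul_mem (N.mul_mem (N.mul_mem (N.mul_mem h1 h4) h2) h6) h5) h3

lemma neg_elt (N : Subgroup (V ≃ₗ[R] V)) (a b : V) (hab : ω a b = 1)
    (h1 : T ω hω a 2 ∈ N) (h2 : T ω hω b 2 ∈ N) (h4 : T ω hω (a - b) 2 ∈ N) :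
    ∃ g ∈ N, g (a - b) = -(a - b) := by
  have hba : ω b a = -1 := by rw [om_swap ω hω, hab]
  refine ⟨T ω hω a 2 * T ω hω (a - b) 2 * T ω hω b 2, N.mul_mem (N.mul_mem h1 h4) h2, ?_⟩
  simp only [LinearEquiv.mul_apply, T_apply, map_add, map_sub, map_smul, 
      LinearMap.sub_apply, smul_eq_mul, hω, hab, hba]
  module

/-- The vectors `w` orthogonal to `f` whose Heisenberg element lies in `N`. -/
def Heis (N : Subgroup (V ≃ₗ[R] V)) (f : V) (hf : ∀ k : R, T ω hω f (2 * k) ∈ N) : AddSubgroup V where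
  carrier := {w | ω f w = 0 ∧ ∃ φ ∈ N, ∀ x, φ x = x + (2 * ω f x) • w + (2 * ω w x) • f}
  zero_mem' := ⟨by simp, 1, N.one_mem, by simp⟩
  add_mem' := by
    rintro w w' ⟨h, φ, hφ, e⟩ ⟨h', φ', hφ', e'⟩
    refine ⟨by simp [h, h'], T ω hω f (2 * (-2 * ω w w')) * φ * φ',
      N.mul_mem (N.mul_mem (hf _) hφ) hφ', fun x => ?_⟩
    have hwf : ω w f = 0 := by rw [om_swap ω hω, h, neg_zero]
    simp only [LinearEquiv.mul_apply, T_apply, e, e', map_add, map_smul, LinearMap.add_apply,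
      smul_eq_mul, hω, h, h', hwf]
    module
  neg_mem' := by
    rintro w ⟨h, φ, hφ, e⟩
    refine ⟨by simp [h], φ⁻¹, N.inv_mem hφ, fun x => ?_⟩
    have hwf : ω w f = 0 := by rw [om_swap ω hω, h, neg_zero]
    apply φ.injective
    change φ (φ.symm x) = _
    rw [LinearEquiv.apply_symm_apply, e]
    simp only [map_add, map_smul, map_neg, LinearMap.neg_apply,
      smul_eq_mul, hω, h, hwf]
    module

lemma mem_Heis (N : Subgroup (V ≃ₗ[R] V)) (f : V) (hf : ∀ k : R, T ω hω f (2 * k) ∈ N) (w : V)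
    (h : ω f w = 0) (hw : T ω hω w 2 ∈ N) (hfw : T ω hω (f + w) 2 ∈ N) : w ∈ Heis ω hω N f hf := by
  have hwf : ω w f = 0 := by rw [om_swap ω hω, h, neg_zero]
  refine ⟨h, T ω hω (f + w) 2 * (T ω hω f (2 * 1))⁻¹ * (T ω hω w 2)⁻¹,
    N.mul_mem (N.mul_mem hfw (N.inv_mem (hf 1))) (N.inv_mem hw), fun x => ?_⟩
  simp only [LinearEquiv.mul_apply, T_inv, T_apply, map_add, map_smul, LinearMap.add_apply,
      smul_eq_mul, hω, h, hwf]
  module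

lemma T_sub_conj (a b : V) (n ε : R) (hab : ω a b = ε) (hε : ε = 1 ∨ ε = -1) :
    T ω hω (a - b) n = T ω hω b ε * T ω hω a n * (T ω hω b ε)⁻¹ := by
  have hba : ω b a = -ε := by rw [om_swap ω hω, hab]
  rw [eq_mul_inv_iff_mul_eq]
  rcases hε with rfl | rfl
  all_goals
    ext x
    simp only [LinearEquiv.mul_apply, T_apply, map_add, map_sub, map_smul,
      LinearMap.sub_apply, smul_eq_mul, hω, hab, hba]
    module

end abstract_part

/-- The form on `ℤ^d` given by `Omega`. -/
def om (d : ℕ) : (Fin d → ℤ) →ₗ[ℤ] (Fin d → ℤ) →ₗ[ℤ] ℤ := Matrix.toLinearMap₂' ℤ (Omega d)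

lemma om_apply (d : ℕ) (x y : Fin d → ℤ) : om d x y = ∑ i, ∑ j, x i * Omega d i j * y j := by
  rw [om, Matrix.toLinearMap₂'_apply]
  refine Finset.sum_congr rfl fun i _ => Finset.sum_congr rfl fun j _ => ?_
  simp [mul_comm, mul_left_comm]

lemma Omega_zero_zero (d : ℕ) : Omega (d + 1) 0 0 = 0 := by simp [Omega]
lemma Omega_zero_succ (d : ℕ) (i : Fin d) : Omega (d + 1) 0 i.succ = 1 := by simp [Omega]
lemma Omega_succ_zero (d : ℕ) (i : Fin d) : Omega (d + 1) i.succ 0 = -1 := by simp [Omega]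
lemma Omega_succ_succ (d : ℕ) (i j : Fin d) : Omega (d + 1) i.succ j.succ = Omega d i j := by
  simp [Omega]
lemma Omega_antisymm (d : ℕ) (i j : Fin d) : Omega d i j = - Omega d j i := by
  simp only [Omega, Matrix.of_apply]
  split_ifs <;> first | rfl | omega

lemma om_self (d : ℕ) (x : Fin d → ℤ) : om d x x = 0 := by
  have h : om d x x = - om d x x := by
    conv_lhs => rw [om_apply, Finset.sum_comm]
    rw [om_apply, ← Finset.sum_neg_distrib]
    refine Finset.sum_congr rfl fun i _ => ?_
    rw [← Finset.sum_neg_distrib]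
    refine Finset.sum_congr rfl fun j _ => ?_
    rw [Omega_antisymm d j i]; ring
  omega

lemma om_succ (d : ℕ) (x y : Fin (d + 1) → ℤ) : om (d + 1) x y =
    x 0 * (∑ i : Fin d, y i.succ) - y 0 * (∑ i : Fin d, x i.succ)
      + om d (fun i => x i.succ) (fun i => y i.succ) := by
  simp only [om_apply, Fin.sum_univ_succ, Omega_zero_zero, Omega_zero_succ, Omega_succ_zero,
    Omega_succ_succ, Finset.sum_add_distrib, Finset.mul_sum]
  rw [add_assoc, sub_eq_add_neg, ← Finset.sum_neg_distrib]
  simp only [mul_zero, zero_mul, zero_add, mul_one, mul_neg, neg_mul, mul_comm (y 0)]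
  abel

lemma om2 (d : ℕ) (x y : Fin (d + 2) → ℤ) : om (d + 2) x y =
    x 0 * (y 1 + ∑ i : Fin d, y i.succ.succ) - y 0 * (x 1 + ∑ i : Fin d, x i.succ.succ)
      + (x 1 * (∑ i : Fin d, y i.succ.succ) - y 1 * (∑ i : Fin d, x i.succ.succ)
      + om d (fun i => x i.succ.succ) (fun i => y i.succ.succ)) := by
  rw [om_succ, om_succ]
  simp only [Fin.sum_univ_succ, Fin.succ_zero_eq_one]

lemma om_single (d : ℕ) (i j : Fin d) :
    om d (Pi.single i 1) (Pi.single j 1) = Omega d i j := by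
  rw [om_apply]
  simp [Pi.single_apply]

abbrev e {d : ℕ} (i : Fin d) : Fin d → ℤ := Pi.single i 1
abbrev TT (d : ℕ) (v : Fin d → ℤ) (n : ℤ) := T (om d) (om_self d) v n

/-- The level two subgroup generated by squares of transvections. -/
def N (d : ℕ) : Subgroup ((Fin d → ℤ) ≃ₗ[ℤ] (Fin d → ℤ)) :=
  Subgroup.closure ({φ | ∃ i : Fin d, φ = TT d (e i) 2} ∪
    {φ | ∃ i j : Fin d, i ≠ j ∧ φ = TT d (e i - e j) 2})

lemma memN1 {d : ℕ} (i : Fin d) : TT d (e i) 2 ∈ N d := Subgroup.subset_closure (Or.inl ⟨i, rfl⟩)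
lemma memN2 {d : ℕ} (i j : Fin d) (h : i ≠ j) : TT d (e i - e j) 2 ∈ N d :=
  Subgroup.subset_closure (Or.inr ⟨i, j, h, rfl⟩)

lemma T_zpow_mem {d : ℕ} (N : Subgroup ((Fin d → ℤ) ≃ₗ[ℤ] (Fin d → ℤ))) (v : Fin d → ℤ)
    (h : TT d v 2 ∈ N) (k : ℤ) :
    TT d v (2 * k) ∈ N := by
  have : ∀ k : ℤ, TT d v (2 * k) = (TT d v 2) ^ k := by
    intro k
    induction k with
    | zero => ext x; simp [T_apply]
    | succ i ih => rw [_root_.zpow_add_one, ← ih, T_mul]; congr 1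
    | pred i ih => rw [_root_.zpow_sub_one, ← ih, T_inv, T_mul]; congr 1; ring
  rw [this]
  exact N.zpow_mem h k

/-- Induction principle for `N`. -/
lemma N_induct {d : ℕ} (P : ((Fin d → ℤ) ≃ₗ[ℤ] (Fin d → ℤ)) → Prop)
    (hT : ∀ v, TT d v 2 ∈ N d → P (TT d v 2)) (h1 : P 1) (hm : ∀ φ ψ, P φ → P ψ → P (φ * ψ))
    (hi : ∀ φ, P φ → P φ⁻¹) {φ} (hφ : φ ∈ N d) : P φ := by
  refine Subgroup.closure_induction (p := fun φ _ => P φ) ?_ h1 (fun φ ψ _ _ => hm φ ψ)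
    (fun φ _ => hi φ) hφ
  rintro φ (⟨i, rfl⟩ | ⟨i, j, hij, rfl⟩)
  · exact hT _ (memN1 i)
  · exact hT _ (memN2 i j hij)

lemma N_isom {d : ℕ} {φ} (hφ : φ ∈ N d) (x y) : om d (φ x) (φ y) = om d x y := by
  revert x y
  refine N_induct (fun φ => ∀ x y, om d (φ x) (φ y) = om d x y) ?_ ?_ ?_ ?_ hφ
  · intro v _ x y; exact T_isom _ _ _ _ _ _
  · simp
  · intro φ ψ h h' x y; simp [LinearEquiv.mul_apply, h, h']
  · intro φ h x y
    rw [← h, ← LinearEquiv.mul_apply, ← LinearEquiv.mul_apply, mul_inv_cancel]; rfl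

lemma N_par {d : ℕ} {φ} (hφ : φ ∈ N d) (x) : ∃ z, φ x = x + (2 : ℤ) • z := by
  revert x
  refine N_induct (fun φ => ∀ x, ∃ z, φ x = x + (2 : ℤ) • z) ?_ ?_ ?_ ?_ hφ
  · intro v _ x; exact ⟨om d v x • v, by rw [T_apply, mul_smul]⟩
  · intro x; exact ⟨0, by simp⟩
  · intro φ ψ h h' x
    obtain ⟨z, hz⟩ := h' x
    obtain ⟨z', hz'⟩ := h (ψ x)
    exact ⟨z + z', by rw [LinearEquiv.mul_apply, hz', hz, smul_add, add_assoc]⟩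
  · intro φ h x
    obtain ⟨z, hz⟩ := h (φ⁻¹ x)
    rw [← LinearEquiv.mul_apply, mul_inv_cancel] at hz
    exact ⟨-z, by rw [smul_neg, ← sub_eq_add_neg, eq_sub_iff_add_eq, ← hz]; rfl⟩

lemma N_det {d : ℕ} {φ} (hφ : φ ∈ N d) : LinearMap.det (φ : (Fin d → ℤ) →ₗ[ℤ] (Fin d → ℤ)) = 1 := by
  have : LinearEquiv.det φ = 1 := by
    refine N_induct (fun φ => LinearEquiv.det φ = 1) ?_ ?_ ?_ ?_ hφ
    · intro v _
      have : TT d v 2 = TT d v 1 * TT d v 1 := by rw [T_mul]; rfl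
      rw [this, map_mul, Int.units_mul_self]
    · simp
    · intro φ ψ h h'; rw [map_mul, h, h', one_mul]
    · intro φ h; rw [map_inv, h, inv_one]
  rw [← LinearEquiv.coe_det, this]; rfl

@[simp] lemma ss_ne {d : ℕ} (i : Fin d) : ¬ (i.succ.succ = (1 : Fin (d + 2))) := by
  rw [← Fin.succ_zero_eq_one]; exact fun h => (Fin.succ_ne_zero _) (Fin.succ_injective _ h)
@[simp] lemma ss_ne' {d : ℕ} (i : Fin d) : ¬ ((1 : Fin (d + 2)) = i.succ.succ) :=
  fun h => ss_ne i h.symm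

lemma ext2 {d : ℕ} {x y : Fin (d + 2) → ℤ} (h0 : x 0 = y 0) (h1 : x 1 = y 1)
    (h : ∀ i : Fin d, x i.succ.succ = y i.succ.succ) : x = y := by
  funext i
  refine Fin.cases h0 (fun i => Fin.cases h1 (fun i => h i) i) i

/-- Extension by zero in the first two coordinates. -/
def io (d : ℕ) : (Fin d → ℤ) →ₗ[ℤ] (Fin (d + 2) → ℤ) where
  toFun x := Fin.cons 0 (Fin.cons 0 x)
  map_add' x y := ext2 (show (0 : ℤ) = 0 + 0 by simp) (show (0 : ℤ) = 0 + 0 by simp) (fun i => rfl)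
  map_smul' x y := ext2 (show (0 : ℤ) = x * 0 by simp) (show (0 : ℤ) = x * 0 by simp) (fun i => rfl)

@[simp] lemma io_zero (d : ℕ) (x : Fin d → ℤ) : io d x 0 = 0 := rfl
@[simp] lemma io_one (d : ℕ) (x : Fin d → ℤ) : io d x 1 = 0 := rfl
@[simp] lemma io_succ (d : ℕ) (x : Fin d → ℤ) (i : Fin d) : io d x i.succ.succ = x i := rfl

lemma io_single (d : ℕ) (i : Fin d) : io d (e i) = e i.succ.succ := by
  refine ext2 ?_ ?_ ?_
  · simp
  · rw [io_one]; simp [Pi.single_apply]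
  · intro j; simp [Pi.single_apply]

/-- The distinguished root. -/
def ff (d : ℕ) : Fin (d + 2) → ℤ := e 0 - e 1

@[simp] lemma e0_zero (d : ℕ) : (e 0 : Fin (d + 2) → ℤ) 0 = 1 := by simp
@[simp] lemma e0_one (d : ℕ) : (e 0 : Fin (d + 2) → ℤ) 1 = 0 := by simp
@[simp] lemma e0_succ (d : ℕ) (i : Fin d) : (e 0 : Fin (d + 2) → ℤ) i.succ.succ = 0 := by simp
@[simp] lemma e1_succ (d : ℕ) (i : Fin d) : (e 1 : Fin (d + 2) → ℤ) i.succ.succ = 0 := by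
  simp [Pi.single_apply]
@[simp] lemma ff_zero (d : ℕ) : ff d 0 = 1 := by simp [ff]
@[simp] lemma ff_one (d : ℕ) : ff d 1 = -1 := by simp [ff]
@[simp] lemma ff_succ (d : ℕ) (i : Fin d) : ff d i.succ.succ = 0 := by
  rw [ff, Pi.sub_apply, e0_succ, e1_succ]; rfl

lemma om_ff (d : ℕ) (x) : om (d + 2) (ff d) x = x 0 + x 1 := by
  rw [om2]; simp only [ff_zero, ff_one, ff_succ]
  rw [show (fun _ : Fin d => (0 : ℤ)) = 0 from rfl]
  simp; ring

lemma om_io (d : ℕ) (x y) : om (d + 2) (io d x) (io d y) = om d x y := by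
  rw [om2]; simp

lemma om_e0 (d : ℕ) (x) : om (d + 2) (e 0) x = x 1 + ∑ i : Fin d, x i.succ.succ := by
  rw [om2]; simp only [e0_zero, e0_one, e0_succ]
  rw [show (fun _ : Fin d => (0 : ℤ)) = 0 from rfl]
  simp

lemma memff (d : ℕ) : TT (d + 2) (ff d) 2 ∈ N (d + 2) := memN2 0 1 (by simp)

/-- Lifting from `d` to `d + 2`. -/
lemma lift {d : ℕ} {φ} (hφ : φ ∈ N d) : ∃ ψ ∈ N (d + 2), ψ (ff d) = ff d ∧
    ∀ x, ψ (io d x) = io d (φ x) := by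
  have key : ∀ v, TT (d + 2) (io d v) 2 (ff d) = ff d ∧
      ∀ x, TT (d + 2) (io d v) 2 (io d x) = io d (TT d v 2 x) := by
    intro v
    refine ⟨?_, fun x => ?_⟩
    · rw [T_apply, om_swap _ (om_self _), om_ff]; simp
    · rw [T_apply, T_apply, om_io, map_add, map_smul]
  refine Subgroup.closure_induction (p := fun φ _ => ∃ ψ ∈ N (d + 2), ψ (ff d) = ff d ∧
    ∀ x, ψ (io d x) = io d (φ x)) ?_ ?_ ?_ ?_ hφ
  · rintro φ (⟨i, rfl⟩ | ⟨i, j, hij, rfl⟩)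
    · refine ⟨_, ?_, key _⟩
      rw [io_single]; exact memN1 _
    · refine ⟨_, ?_, key _⟩
      rw [map_sub, io_single, io_single]; exact memN2 _ _ (by simpa using hij)
  · exact ⟨1, Subgroup.one_mem _, rfl, fun x => rfl⟩
  · rintro φ φ' _ _ ⟨ψ, h1, h2, h3⟩ ⟨ψ', h1', h2', h3'⟩
    exact ⟨ψ * ψ', Subgroup.mul_mem _ h1 h1', by simp [LinearEquiv.mul_apply, h2, h2'],
      fun x => by simp [LinearEquiv.mul_apply, h3, h3']⟩
  · rintro φ _ ⟨ψ, h1, h2, h3⟩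
    refine ⟨ψ⁻¹, Subgroup.inv_mem _ h1, ?_, fun x => ?_⟩
    · apply ψ.injective
      rw [← LinearEquiv.mul_apply, mul_inv_cancel, h2]; rfl
    · apply ψ.injective
      rw [← LinearEquiv.mul_apply, mul_inv_cancel, h3, ← LinearEquiv.mul_apply φ, mul_inv_cancel]; rfl

lemma memg (d : ℕ) (i : Fin d) : TT (d + 2) (e 0 - e 1 + e i.succ.succ) 2 ∈ N (d + 2) := by
  have h1 : (0 : Fin (d + 2)) ≠ 1 := by simp
  have h2 : (0 : Fin (d + 2)) ≠ i.succ.succ := (Fin.succ_ne_zero _).symm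
  have h3 : (1 : Fin (d + 2)) ≠ i.succ.succ := by
    rw [← Fin.succ_zero_eq_one]; exact fun h => (Fin.succ_ne_zero _).symm (Fin.succ_injective _ h)
  refine chain _ _ _ _ _ _ ?_ ?_ ?_ (memN1 _) (memN1 _) (memN1 _) (memN2 _ _ h1) (memN2 _ _ h2)
    (memN2 _ _ h3)
  · rw [om_single, ← Fin.succ_zero_eq_one, Omega_zero_succ]
  · rw [om_single, Omega_zero_succ]
  · rw [om_single, ← Fin.succ_zero_eq_one, Omega_succ_succ, Omega_zero_succ]

lemma sum_single {d : ℕ} (z : Fin d → ℤ) : z = ∑ i, z i • e i := by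
  funext j; simp [Pi.single_apply]

lemma heis_f (d : ℕ) (z : Fin d → ℤ) : ∃ φ ∈ N (d + 2), ∀ x, φ x =
    x + (2 * om (d + 2) (ff d) x) • io d z + (2 * om (d + 2) (io d z) x) • ff d := by
  have hf := T_zpow_mem _ _ (memff d)
  have : io d z ∈ Heis (om (d + 2)) (om_self _) (N (d + 2)) (ff d) hf := by
    rw [sum_single z, map_sum]
    refine AddSubgroup.sum_mem _ fun i _ => ?_
    rw [map_smul]
    refine AddSubgroup.zsmul_mem _ ?_ _
    rw [io_single]
    refine mem_Heis _ _ _ _ _ _ ?_ (memN1 _) (memg d i)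
    rw [om_ff, ← io_single]; simp
  exact this.2

lemma heis_e (d : ℕ) (z : Fin d → ℤ) : ∃ w : Fin (d + 2) → ℤ, (∀ i, w i.succ.succ = z i) ∧
    w 0 = 0 ∧ om (d + 2) (e 0) w = 0 ∧ ∃ φ ∈ N (d + 2), ∀ x, φ x =
    x + (2 * om (d + 2) (e 0) x) • w + (2 * om (d + 2) w x) • (e 0) := by
  have hf := T_zpow_mem _ _ (memN1 (0 : Fin (d + 2)))
  have : ∑ i, z i • (io d (e i) - e 1) ∈
      Heis (om (d + 2)) (om_self _) (N (d + 2)) (e 0) hf := by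
    refine AddSubgroup.sum_mem _ fun i _ => ?_
    refine AddSubgroup.zsmul_mem _ ?_ _
    refine mem_Heis _ _ _ _ _ _ ?_ ?_ ?_
    · rw [om_e0]
      simp [Pi.single_apply]
    · rw [io_single]; refine memN2 _ _ ?_
      rw [← Fin.succ_zero_eq_one]; exact fun h => (Fin.succ_ne_zero _) (Fin.succ_injective _ h)
    · have := memg d i
      rw [io_single]
      convert this using 2
      abel
  refine ⟨_, ?_, ?_, this.1, this.2⟩
  · intro j; simp [Finset.sum_apply, Pi.single_apply]
  · simp [Finset.sum_apply]

lemma near_pos (a b : ℤ) (hb : 0 < b) : ∃ k : ℤ, |a + 2 * k * b| ≤ b := by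
  have h1 := Int.emod_add_mul_ediv a (2 * b)
  have h2 := Int.emod_nonneg a (show 2 * b ≠ 0 by omega)
  have h3 := Int.emod_lt_of_pos a (show 0 < 2 * b by omega)
  by_cases h : a % (2 * b) ≤ b
  · refine ⟨-(a / (2 * b)), ?_⟩
    rw [show a + 2 * -(a / (2 * b)) * b = a % (2 * b) by linear_combination -h1, abs_le]
    omega
  · refine ⟨-(a / (2 * b)) - 1, ?_⟩
    rw [show a + 2 * (-(a / (2 * b)) - 1) * b = a % (2 * b) - 2 * b by linear_combination -h1,
      abs_le]
    omega

lemma near (a b : ℤ) (hb : b ≠ 0) : ∃ k : ℤ, |a + 2 * k * b| ≤ |b| := by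
  rcases lt_or_gt_of_ne hb with h | h
  · obtain ⟨k, hk⟩ := near_pos a (-b) (by omega)
    exact ⟨-k, by rw [abs_of_neg h]; convert hk using 2; ring⟩
  · rw [abs_of_pos h]; exact near_pos a b h

lemma euclid (d : ℕ) : ∀ n : ℕ, ∀ v : Fin (d + 2) → ℤ, (om (d + 2) (e 0) v).natAbs = n →
    (∃ z, v = ff d + (2 : ℤ) • z) → (∃ y, om (d + 2) y v = 1) →
    ∃ g ∈ N (d + 2), (om (d + 2) (e 0) (g v)).natAbs = 1 := by
  intro n
  induction n using Nat.strong_induction_on with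
  | _ n ih =>
  intro v hn hz hy
  have hsw : om (d + 2) (e 0) (ff d) = -1 := by
    rw [om_swap _ (om_self _), om_ff]; simp
  have hodd : ∃ k, om (d + 2) (e 0) v = 2 * k + 1 := by
    obtain ⟨z, hz⟩ := hz
    refine ⟨om (d + 2) (e 0) z - 1, ?_⟩
    rw [hz, map_add, hsw, map_smul, smul_eq_mul]; ring
  set m := om (d + 2) (e 0) v with hm
  have hm0 : m ≠ 0 := by omega
  -- one descent step
  have step : ∀ r, TT (d + 2) r 2 ∈ N (d + 2) → om (d + 2) (e 0) r = 1 → 2 ∣ om (d + 2) r v →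
      ¬ (m ∣ om (d + 2) r v) → ∃ g ∈ N (d + 2), (om (d + 2) (e 0) (g v)).natAbs = 1 := by
    intro r hr h1 h2 h3
    have h1' : om (d + 2) r (e 0) = -1 := by rw [om_swap _ (om_self _), h1]
    obtain ⟨k, hk⟩ := near (om (d + 2) r v) m hm0
    set ρ := om (d + 2) r v + 2 * k * m with hρ
    have hρ0 : ρ ≠ 0 := by
      intro h; apply h3; exact ⟨-(2 * k), by linear_combination hρ.symm.trans h⟩
    have hρe : 2 ∣ ρ := by
      obtain ⟨c, hc⟩ := h2
      exact ⟨c + k * m, by rw [hρ, hc]; ring⟩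
    have hlt : |ρ| < |m| := by
      refine lt_of_le_of_ne hk fun h => ?_
      rcases abs_eq_abs.mp h with h | h <;> omega
    obtain ⟨l, hl⟩ := near m ρ hρ0
    set g1 := TT (d + 2) (e 0) (2 * (-k)) with hg1
    set g2 := TT (d + 2) r (2 * l) with hg2
    have m1 : g1 ∈ N (d + 2) := T_zpow_mem _ _ (memN1 _) _
    have m2 : g2 ∈ N (d + 2) := T_zpow_mem _ _ hr _
    have m12 := Subgroup.mul_mem _ m2 m1
    have e1 : om (d + 2) (e 0) (g1 v) = m := by
      rw [hg1, T_apply, map_add, map_smul, om_self]; simp [hm]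
    have e2 : om (d + 2) r (g1 v) = ρ := by
      rw [hg1, T_apply, map_add, map_smul, h1', smul_eq_mul, ← hm, hρ]; ring
    have e3 : om (d + 2) (e 0) ((g2 * g1) v) = m + 2 * l * ρ := by
      rw [LinearEquiv.mul_apply, hg2, T_apply, map_add, map_smul, e1, e2, h1, smul_eq_mul]; ring
    obtain ⟨g, hg, hg'⟩ := ih (om (d + 2) (e 0) ((g2 * g1) v)).natAbs (by rw [e3, ← hn]; zify; exact lt_of_le_of_lt hl hlt)
      ((g2 * g1) v) rfl (by
        obtain ⟨z, hz⟩ := hz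
        obtain ⟨z', hz'⟩ := N_par m12 v
        exact ⟨z + z', by rw [hz', hz, smul_add, add_assoc]⟩) (by
        obtain ⟨y, hy⟩ := hy
        exact ⟨(g2 * g1) y, by rw [N_isom m12, hy]⟩)
    exact ⟨g * (g2 * g1), Subgroup.mul_mem _ hg m12, hg'⟩
  by_cases hall : ∀ j : Fin (d + 1), m ∣ om (d + 2) (e j.succ) v
  · refine ⟨1, Subgroup.one_mem _, ?_⟩
    obtain ⟨y, hy⟩ := hy
    have : m ∣ om (d + 2) y v := by
      rw [sum_single y, map_sum, LinearMap.sum_apply]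
      refine Finset.dvd_sum fun i _ => ?_
      rw [map_smul, LinearMap.smul_apply, smul_eq_mul]
      refine Dvd.dvd.mul_left ?_ _
      refine Fin.cases ?_ (fun j => hall j) i
      exact dvd_refl _
    rw [hy] at this
    exact Int.natAbs_eq_iff.mpr (by simpa using Int.isUnit_iff.mp (isUnit_of_dvd_one this))
  · push Not at hall
    obtain ⟨j, hj⟩ := hall
    have h01 : om (d + 2) (e 0) (e j.succ) = 1 := by rw [om_single, Omega_zero_succ]
    by_cases h2 : 2 ∣ om (d + 2) (e j.succ) v
    · exact step _ (memN1 _) h01 h2 hj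
    · refine step (e j.succ - e 0) (memN2 _ _ (Fin.succ_ne_zero _)) ?_ ?_ ?_
      · rw [map_sub, h01, om_self]; rfl
      · rw [map_sub, LinearMap.sub_apply, ← hm]; omega
      · rw [map_sub, LinearMap.sub_apply, ← hm]
        intro h; exact hj ((dvd_sub_self_right).mp h)

lemma to_f (d : ℕ) (v : Fin (d + 2) → ℤ) (hz : ∃ z, v = ff d + (2 : ℤ) • z)
    (hy : ∃ y, om (d + 2) y v = 1) : ∃ g ∈ N (d + 2), g v = ff d := by
  obtain ⟨g, hg, h1⟩ := euclid d _ v rfl hz hy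
  have hz1 : ∃ z, g v = ff d + (2 : ℤ) • z := by
    obtain ⟨z, hz⟩ := hz
    obtain ⟨z', hz'⟩ := N_par hg v
    exact ⟨z + z', by rw [hz', hz, smul_add, add_assoc]⟩
  suffices h : ∃ g' ∈ N (d + 2), g' (g v) = ff d by
    obtain ⟨g', hg', h'⟩ := h
    exact ⟨g' * g, Subgroup.mul_mem _ hg' hg, h'⟩
  generalize g v = u at h1 hz1
  clear hz hy hg g v
  obtain ⟨z, hz⟩ := hz1
  obtain ⟨ε, hε, hε1⟩ : ∃ ε : ℤ, om (d + 2) (e 0) u = ε ∧ ε * ε = 1 := by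
    refine ⟨_, rfl, ?_⟩
    rcases Int.natAbs_eq_iff.mp h1 with h | h <;> rw [h] <;> rfl
  obtain ⟨w, hw, hw0, hw1, φ, hφ, hφ'⟩ := heis_e d (fun i => -ε * z i.succ.succ)
  have hu : ∀ i : Fin d, (φ u) i.succ.succ = 0 := by
    intro i
    rw [hφ']
    simp only [Pi.add_apply, Pi.smul_apply, smul_eq_mul, hw, e0_succ, hε]
    rw [hz]
    simp only [Pi.add_apply, Pi.smul_apply, smul_eq_mul, ff_succ]
    linear_combination (-2 * z i.succ.succ) * hε1
  have hu1 : (φ u) 1 = ε := by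
    have : om (d + 2) (e 0) (φ u) = ε := by
      rw [hφ', map_add, map_add, map_smul, map_smul, hw1, om_self, hε]; simp
    rw [om_e0] at this
    simpa [hu] using this
  obtain ⟨z', hz'⟩ := N_par hφ u
  have hu0 : ∃ k, (φ u) 0 = 2 * k - ε := by
    rw [hz', hz]
    have : ε = 1 ∨ ε = -1 := by
      rcases Int.isUnit_iff.mp (IsUnit.of_mul_eq_one _ hε1) with h | h <;> simp [h]
    rcases this with rfl | rfl
    · exact ⟨z 0 + z' 0 + 1, by simp; ring⟩
    · exact ⟨z 0 + z' 0, by simp; ring⟩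
  obtain ⟨k, hk⟩ := hu0
  have hT : TT (d + 2) (e 0) (2 * (-k * ε)) (φ u) = (-ε) • ff d := by
    have h0 : om (d + 2) (e 0) (φ u) = ε := by rw [om_e0, hu1]; simp [hu]
    rw [T_apply, h0]
    refine ext2 ?_ ?_ ?_
    · simp only [Pi.add_apply, Pi.smul_apply, smul_eq_mul, e0_zero, ff_zero, hk]
      linear_combination (-2 * k) * hε1
    · simp only [Pi.add_apply, Pi.smul_apply, smul_eq_mul, e0_one, ff_one, hu1]; ring
    · intro i
      simp only [Pi.add_apply, Pi.smul_apply, smul_eq_mul, e0_succ, ff_succ, hu]; ring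
  have hm := Subgroup.mul_mem _ (T_zpow_mem _ _ (memN1 (0 : Fin (d + 2))) (-k * ε)) hφ
  rcases Int.isUnit_iff.mp (IsUnit.of_mul_eq_one _ hε1) with h | h
  · obtain ⟨g, hg, hg'⟩ := neg_elt (om (d + 2)) (om_self _) (N (d + 2)) (e 0) (e 1) (by
      rw [om_single, ← Fin.succ_zero_eq_one, Omega_zero_succ]) (memN1 _) (memN1 _) (memff d)
    refine ⟨g * _, Subgroup.mul_mem _ hg hm, ?_⟩
    rw [LinearEquiv.mul_apply, LinearEquiv.mul_apply, hT, map_smul]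
    change (-ε) • g (e 0 - e 1) = _
    rw [hg', h]
    simp [ff]
  · refine ⟨_, hm, ?_⟩
    rw [LinearEquiv.mul_apply, hT, h]; simp

lemma det_descend (d : ℕ) (A : (Fin (d + 2) → ℤ) →ₗ[ℤ] (Fin (d + 2) → ℤ))
    (A' : (Fin d → ℤ) →ₗ[ℤ] (Fin d → ℤ)) (hf : A (ff d) = ff d)
    (hA : ∀ x, (A x) 0 + (A x) 1 = x 0 + x 1)
    (hA' : ∀ x i, A' x i = A (io d x) i.succ.succ) : LinearMap.det A = LinearMap.det A' := by
  rw [← LinearMap.det_toMatrix', ← LinearMap.det_toMatrix' (f := A')]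
  set M := LinearMap.toMatrix' A with hM
  set M' := LinearMap.toMatrix' A' with hM'
  have h01 : (1 : Fin (d + 2)) ≠ 0 := by simp
  have hMe : ∀ i j, M i j = A (e j) i := fun i j => by rw [hM, LinearMap.toMatrix'_apply]
  have hM'e : ∀ i j, M' i j = M i.succ.succ j.succ.succ := fun i j => by
    rw [hM', LinearMap.toMatrix'_apply, hMe, hA', ← io_single]
  have hcol : ∀ i, M i 0 - M i 1 = ff d i := fun i => by
    rw [hMe, hMe, ← Pi.sub_apply, ← map_sub]; exact congrFun hf i
  have hrow : ∀ j, M 0 j + M 1 j = (e j : Fin (d + 2) → ℤ) 0 + (e j : Fin (d + 2) → ℤ) 1 :=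
    fun j => by rw [hMe, hMe, hA]
  set C := transvection 1 0 (1 : ℤ) * M * transvection 1 0 (-1 : ℤ) with hC
  have hdet : C.det = M.det := by
    rw [hC, det_mul, det_mul, det_transvection_of_ne _ _ h01, det_transvection_of_ne _ _ h01]; ring
  have c0 : C 0 0 = 1 := by
    rw [hC, mul_transvection_apply_same, transvection_mul_apply_of_ne _ _ _ _ h01.symm,
      transvection_mul_apply_of_ne _ _ _ _ h01.symm]
    have := hcol 0; rw [ff_zero] at this; linarith
  have c1 : C 1 0 = 0 := by
    rw [hC, mul_transvection_apply_same, transvection_mul_apply_same,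
      transvection_mul_apply_same]
    have := hcol 0; have := hcol 1; rw [ff_zero] at *; rw [ff_one] at *; linarith
  have cs : ∀ i : Fin d, C i.succ.succ 0 = 0 := fun i => by
    rw [hC, mul_transvection_apply_same, transvection_mul_apply_of_ne _ _ _ _ (ss_ne i),
      transvection_mul_apply_of_ne _ _ _ _ (ss_ne i)]
    have := hcol i.succ.succ; rw [ff_succ] at this; linarith
  have c11 : C 1 1 = 1 := by
    rw [hC, mul_transvection_apply_of_ne _ _ _ _ h01, transvection_mul_apply_same]
    have := hrow 1; simp at this; linarith
  have c1s : ∀ i : Fin d, C 1 i.succ.succ = 0 := fun i => by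
    rw [hC, mul_transvection_apply_of_ne _ _ _ _ (Fin.succ_ne_zero _), transvection_mul_apply_same]
    have := hrow i.succ.succ; simp [Pi.single_apply] at this; linarith
  have css : ∀ i j : Fin d, C i.succ.succ j.succ.succ = M' i j := fun i j => by
    rw [hC, mul_transvection_apply_of_ne _ _ _ _ (Fin.succ_ne_zero _),
      transvection_mul_apply_of_ne _ _ _ _ (ss_ne i), hM'e]
  rw [← hdet, det_succ_column_zero, Fin.sum_univ_succ, Fin.sum_univ_succ]
  simp only [Fin.succ_zero_eq_one, c0, c1, cs]
  rw [det_succ_row_zero, Fin.sum_univ_succ]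
  simp only [submatrix_apply, Fin.succAbove_zero, Fin.succ_zero_eq_one, c11, c1s]
  simp only [Fin.val_zero, pow_zero, mul_zero, zero_mul, one_mul, mul_one, Finset.sum_const_zero, add_zero]
  congr 1
  ext i j
  simp [css]

lemma absorb {d : ℕ} (A : (Fin d → ℤ) →ₗ[ℤ] (Fin d → ℤ)) (g) (hg : g ∈ N d)
    (h : ∃ φ ∈ N d, ∀ x, φ x = g (A x)) : ∃ φ ∈ N d, ∀ x, φ x = A x := by
  obtain ⟨φ, hφ, h⟩ := h
  refine ⟨g⁻¹ * φ, Subgroup.mul_mem _ (Subgroup.inv_mem _ hg) hφ, fun x => ?_⟩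
  rw [LinearEquiv.mul_apply, h, ← LinearEquiv.mul_apply, inv_mul_cancel]; rfl

lemma decomp (d : ℕ) (x : Fin (d + 2) → ℤ) :
    x = (x 0 + x 1) • e 0 + (- x 1) • ff d + io d (fun i => x i.succ.succ) := by
  refine ext2 ?_ ?_ ?_ <;> simp

lemma io_ff (d : ℕ) (x : Fin (d + 2) → ℤ) (h : x 0 + x 1 = 0) :
    x = x 0 • ff d + io d (fun i => x i.succ.succ) := by
  refine ext2 ?_ ?_ ?_
  · simp
  · simp; omega
  · simp

/-- Unipotent case. -/
lemma unip (d : ℕ) (A : (Fin (d + 2) → ℤ) →ₗ[ℤ] (Fin (d + 2) → ℤ))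
    (hA : ∀ x y, om (d + 2) (A x) (A y) = om (d + 2) x y)
    (hp : ∀ x, ∃ z, A x = x + (2 : ℤ) • z) (hf : A (ff d) = ff d)
    (hio : ∀ x, ∃ c : ℤ, A (io d x) = io d x + c • ff d) : ∃ φ ∈ N (d + 2), ∀ x, φ x = A x := by
  have hfio : ∀ x, om (d + 2) (ff d) (io d x) = 0 := fun x => by rw [om_ff]; simp
  have hiof : ∀ x, om (d + 2) (io d x) (ff d) = 0 := fun x => by
    rw [om_swap _ (om_self _), hfio]; rfl
  have hfe : om (d + 2) (ff d) (e 0) = 1 := by rw [om_ff]; simp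
  obtain ⟨z, hz⟩ := hp (e 0)
  have hz0 : z 0 + z 1 = 0 := by
    have := hA (ff d) (e 0)
    rw [hf, hz, map_add, map_smul, hfe, om_ff, smul_eq_mul] at this
    omega
  obtain ⟨φ, hφ, hφ'⟩ := heis_f d (fun i => - z i.succ.succ)
  set w := io d (fun i => - z i.succ.succ) with hw
  obtain ⟨t, ht⟩ : ∃ t : ℤ, φ (A (e 0)) = e 0 + (2 * t) • ff d := by
    have h1 : om (d + 2) (ff d) (A (e 0)) = 1 := by
      conv_lhs => rw [← hf]
      rw [hA, hfe]
    refine ⟨z 0 + om (d + 2) w (A (e 0)), ?_⟩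
    rw [hφ', h1]
    generalize om (d + 2) w (A (e 0)) = s
    rw [hz]
    refine ext2 ?_ ?_ ?_
    · simp [hw]; ring
    · simp [hw]; linear_combination 2 * hz0
    · intro i; simp [hw]
  set g := TT (d + 2) (ff d) (2 * (-t)) * φ with hg
  have hgm : g ∈ N (d + 2) := Subgroup.mul_mem _ (T_zpow_mem _ _ (memff d) _) hφ
  refine absorb A g hgm ⟨1, Subgroup.one_mem _, ?_⟩
  have gf : g (ff d) = ff d := by
    rw [hg, LinearEquiv.mul_apply, hφ', hw, hiof, om_self, T_apply]; simp [om_self]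
  have ge : g (A (e 0)) = e 0 := by
    rw [hg, LinearEquiv.mul_apply, ht, T_apply, map_add, map_smul, om_self, hfe]
    simp
  have gio : ∀ x, g (A (io d x)) = io d x := by
    intro x
    obtain ⟨c, hc⟩ := hio x
    have h1 : ∃ c' : ℤ, g (A (io d x)) = io d x + c' • ff d := by
      refine ⟨c + 2 * om (d + 2) w (io d x), ?_⟩
      rw [hc, map_add, map_smul, gf, hg, LinearEquiv.mul_apply, hφ', hfio, T_apply]
      simp only [map_add, map_smul, hfio, om_self]
      simp [add_smul]; abel
    obtain ⟨c', hc'⟩ := h1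
    have h2 := hA (io d x) (e 0)
    rw [← N_isom hgm, ge, hc', map_add, map_smul, LinearMap.add_apply, LinearMap.smul_apply, hfe] at h2
    have : c' = 0 := by simpa using h2
    rw [hc', this]; simp
  intro x
  conv_rhs => rw [decomp d x]
  conv_lhs => rw [decomp d x]
  simp only [map_add, map_smul, ge, gio, hf, gf]
  rfl

lemma stab (d : ℕ) (ih : ∀ A : (Fin d → ℤ) →ₗ[ℤ] (Fin d → ℤ),
      (∀ x y, om d (A x) (A y) = om d x y) → LinearMap.det A = 1 →
      (∀ x, ∃ z, A x = x + (2 : ℤ) • z) → ∃ φ ∈ N d, ∀ x, φ x = A x)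
    (A : (Fin (d + 2) → ℤ) →ₗ[ℤ] (Fin (d + 2) → ℤ))
    (hA : ∀ x y, om (d + 2) (A x) (A y) = om (d + 2) x y) (hdet : LinearMap.det A = 1)
    (hp : ∀ x, ∃ z, A x = x + (2 : ℤ) • z) (hf : A (ff d) = ff d) :
    ∃ φ ∈ N (d + 2), ∀ x, φ x = A x := by
  have hs : ∀ x, (A x) 0 + (A x) 1 = x 0 + x 1 := fun x => by
    rw [← om_ff, ← om_ff]; conv_lhs => rw [← hf]
    rw [hA]
  set A' : (Fin d → ℤ) →ₗ[ℤ] (Fin d → ℤ) :=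
    (LinearMap.funLeft ℤ ℤ (fun i : Fin d => i.succ.succ)) ∘ₗ A ∘ₗ io d with hA'
  have hA'e : ∀ x i, A' x i = A (io d x) i.succ.succ := fun x i => rfl
  have hAio : ∀ x, A (io d x) = (A (io d x) 0) • ff d + io d (A' x) := fun x =>
    io_ff d _ (by rw [hs]; simp)
  have hfio : ∀ x, om (d + 2) (ff d) (io d x) = 0 := fun x => by rw [om_ff]; simp
  have hiof : ∀ x, om (d + 2) (io d x) (ff d) = 0 := fun x => by
    rw [om_swap _ (om_self _), hfio]; rfl
  obtain ⟨φ', hφ', he⟩ := ih A' (by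
      intro x y
      rw [← om_io d (A' x), ← om_io d x, ← hA (io d x) (io d y), hAio x, hAio y]
      simp only [map_add, map_smul, LinearMap.add_apply, LinearMap.smul_apply, hfio, hiof, om_self]
      simp) (by rw [← det_descend d A A' hf hs hA'e, hdet]) (by
      intro x
      obtain ⟨z, hz⟩ := hp (io d x)
      refine ⟨fun i => z i.succ.succ, ?_⟩
      funext i
      rw [hA'e, hz]; simp)
  obtain ⟨ψ, hψ, hψf, hψio⟩ := lift (Subgroup.inv_mem _ hφ')
  refine absorb A ψ hψ ?_
  refine unip d (ψ.toLinearMap ∘ₗ A) (fun x y => ?_) (fun x => ?_) ?_ (fun x => ?_)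
  · change om _ (ψ (A x)) (ψ (A y)) = _
    rw [N_isom hψ, hA]
  · obtain ⟨z, hz⟩ := hp x
    obtain ⟨z', hz'⟩ := N_par hψ (A x)
    exact ⟨z + z', by change ψ (A x) = _; rw [hz', hz, smul_add, add_assoc]⟩
  · change ψ (A (ff d)) = _
    rw [hf, hψf]
  · refine ⟨A (io d x) 0, ?_⟩
    change ψ (A (io d x)) = _
    conv_lhs => rw [hAio x]
    rw [map_add, map_smul, hψf, hψio, ← he, ← LinearEquiv.mul_apply, inv_mul_cancel]; exact add_comm _ _

theorem level_two : ∀ (d : ℕ) (A : (Fin d → ℤ) →ₗ[ℤ] (Fin d → ℤ)),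
      (∀ x y, om d (A x) (A y) = om d x y) → LinearMap.det A = 1 →
      (∀ x, ∃ z, A x = x + (2 : ℤ) • z) → ∃ φ ∈ N d, ∀ x, φ x = A x := by
  intro d
  induction d using Nat.twoStepInduction with
  | zero => intro A _ _ _; exact ⟨1, Subgroup.one_mem _, fun x => Subsingleton.elim _ _⟩
  | one =>
    intro A _ hd _
    refine ⟨1, Subgroup.one_mem _, fun x => ?_⟩
    rw [← LinearMap.det_toMatrix', Matrix.det_fin_one, LinearMap.toMatrix'_apply] at hd
    have : x = x 0 • e 0 := by funext i; fin_cases i; simp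
    rw [this, map_smul, map_smul]
    congr 1
    funext i; fin_cases i
    exact hd.symm
  | more d ih _ =>
    intro A hA hdet hp
    obtain ⟨g, hg, hgf⟩ := to_f d (A (ff d)) (hp _) ⟨A (-e 0), by
      rw [hA, map_neg, LinearMap.neg_apply, ← om_swap _ (om_self _), om_ff]; simp⟩
    refine absorb A g hg ?_
    refine stab d ih (g.toLinearMap ∘ₗ A) (fun x y => ?_) ?_ (fun x => ?_) hgf
    · change om _ (g (A x)) (g (A y)) = _
      rw [N_isom hg, hA]
    · rw [LinearMap.det_comp, hdet, N_det hg, one_mul]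
    · obtain ⟨z, hz⟩ := hp x
      obtain ⟨z', hz'⟩ := N_par hg (A x)
      exact ⟨z + z', by change g (A x) = _; rw [hz', hz, smul_add, add_assoc]⟩

lemma L_apply (d : ℕ) (p r q : Fin d) :
    L d p r q = (if r = q then 1 else 0) - (if q = p then Omega d r p else 0) := by
  simp only [L, Omega, Matrix.of_apply]
  split_ifs <;> first | rfl | omega

lemma om_e (d : ℕ) (p : Fin d) (x : Fin d → ℤ) : om d (e p) x = ∑ j, Omega d p j * x j := by
  rw [om_apply]
  simp [Pi.single_apply]

lemma L_trans (d : ℕ) (p : Fin d) (x : Fin d → ℤ) : (L d p)ᵀ *ᵥ x = TT d (e p) 1 x := by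
  funext q
  rw [T_apply, om_e]
  simp only [mulVec, dotProduct, transpose_apply, L_apply, sub_mul, Finset.sum_sub_distrib,
    Pi.add_apply, Pi.smul_apply, smul_eq_mul, one_mul, ite_mul, zero_mul, Finset.sum_ite_eq',
    Finset.mem_univ, if_true, Pi.single_apply]
  by_cases h : q = p
  · simp only [h, if_true, mul_one]
    rw [sub_eq_add_neg, ← Finset.sum_neg_distrib]
    congr 1
    refine Finset.sum_congr rfl fun r _ => ?_
    rw [Omega_antisymm d p r]; ring
  · simp [h]

lemma T_det {d : ℕ} (v : Fin d → ℤ) (n : ℤ) :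
    LinearMap.det (TT d v n : (Fin d → ℤ) →ₗ[ℤ] (Fin d → ℤ)) = 1 := by
  have h : (n • om d v) v = 0 := by simp [om_self]
  have h1 : TT d v n = LinearEquiv.transvection h := by
    ext x
    rw [T_apply, LinearEquiv.transvection.apply]; simp
  rw [h1, ← LinearEquiv.coe_det, LinearEquiv.transvection.det_eq_one]; rfl

lemma det_L (d : ℕ) (p : Fin d) : (L d p).det = 1 := by
  have h : Matrix.toLin' (L d p)ᵀ = (TT d (e p) 1 : (Fin d → ℤ) →ₗ[ℤ] (Fin d → ℤ)) := by
    refine LinearMap.ext fun x => ?_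
    rw [Matrix.toLin'_apply, L_trans]; rfl
  rw [← Matrix.det_transpose, ← LinearMap.det_toLin', h, T_det]

/-- The generator `L_p` as a unit. -/
noncomputable def Lu (d : ℕ) (p : Fin d) : (Matrix (Fin d) (Fin d) ℤ)ˣ :=
  Matrix.nonsingInvUnit (L d p) (by rw [det_L]; exact isUnit_one)

lemma Lu_val (d : ℕ) (p : Fin d) : (Lu d p : Matrix (Fin d) (Fin d) ℤ) = L d p := rfl

lemma Lu_mem (d : ℕ) (p : Fin d) : Lu d p ∈ Gd d := Subgroup.subset_closure ⟨p, rfl⟩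

/-- The subgroup of automorphisms that are transposes of elements of `Gd`. -/
def Dual (d : ℕ) : Subgroup ((Fin d → ℤ) ≃ₗ[ℤ] (Fin d → ℤ)) where
  carrier := {φ | ∃ u ∈ Gd d, ∀ x, (u : Matrix (Fin d) (Fin d) ℤ)ᵀ *ᵥ x = φ x}
  one_mem' := ⟨1, (Gd d).one_mem, fun x => by simp⟩
  mul_mem' := by
    rintro φ ψ ⟨u, hu, h⟩ ⟨v, hv, k⟩
    refine ⟨v * u, (Gd d).mul_mem hv hu, fun x => ?_⟩
    rw [Units.val_mul, transpose_mul, ← mulVec_mulVec, k, h]; rfl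
  inv_mem' := by
    rintro φ ⟨u, hu, h⟩
    refine ⟨u⁻¹, (Gd d).inv_mem hu, fun x => ?_⟩
    apply φ.injective
    rw [← h, mulVec_mulVec, ← transpose_mul, ← Units.val_mul, inv_mul_cancel]
    rw [← LinearEquiv.mul_apply, mul_inv_cancel]
    simp

lemma Omega_pm {d : ℕ} (i j : Fin d) (h : i ≠ j) : Omega d i j = 1 ∨ Omega d i j = -1 := by
  simp only [Omega, Matrix.of_apply]
  split_ifs with h1 h2
  · simp
  · simp
  · exact absurd (le_antisymm (not_lt.1 h2) (not_lt.1 h1)) h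

lemma N_le_Dual (d : ℕ) : N d ≤ Dual d := by
  have h1 : ∀ i : Fin d, TT d (e i) 1 ∈ Dual d := fun i => ⟨Lu d i, Lu_mem d i, L_trans d i⟩
  have h2 : ∀ i : Fin d, TT d (e i) 2 ∈ Dual d := fun i => by
    have := (Dual d).mul_mem (h1 i) (h1 i)
    rwa [T_mul] at this
  have hm : ∀ i : Fin d, TT d (e i) (-1) ∈ Dual d := fun i => by
    have := (Dual d).inv_mem (h1 i)
    rwa [T_inv] at this
  rw [N, Subgroup.closure_le]
  rintro φ (⟨i, rfl⟩ | ⟨i, j, hij, rfl⟩)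
  · exact h2 i
  · have hpm := Omega_pm i j hij
    have he : TT d (e j) (Omega d i j) ∈ Dual d := by
      rcases hpm with h | h <;> rw [h]
      · exact h1 j
      · exact hm j
    change TT d (e i - e j) 2 ∈ Dual d
    rw [TT, T_sub_conj (om d) (om_self d) (e i) (e j) 2 (Omega d i j) (om_single d i j) hpm]
    exact (Dual d).mul_mem ((Dual d).mul_mem he (h2 i)) ((Dual d).inv_mem he)

lemma om_dot (d : ℕ) (x y : Fin d → ℤ) : om d x y = x ⬝ᵥ (Omega d *ᵥ y) := by
  rw [om_apply]
  simp only [dotProduct, mulVec, Finset.mul_sum, mul_assoc]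

lemma isom_of (d : ℕ) (B : Matrix (Fin d) (Fin d) ℤ) (h : B * Omega d * Bᵀ = Omega d)
    (x y : Fin d → ℤ) : om d (Bᵀ *ᵥ x) (Bᵀ *ᵥ y) = om d x y := by
  conv_rhs => rw [om_dot, ← h]
  rw [om_dot, mulVec_transpose B x, ← dotProduct_mulVec, mulVec_mulVec, mulVec_mulVec,
    Matrix.mul_assoc]

lemma of_isom (d : ℕ) (B : Matrix (Fin d) (Fin d) ℤ)
    (h : ∀ x y, om d (Bᵀ *ᵥ x) (Bᵀ *ᵥ y) = om d x y) : B * Omega d * Bᵀ = Omega d := by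
  ext i j
  have := h (e i) (e j)
  rw [om_single] at this
  rw [← this, om_dot, mulVec_transpose B, ← dotProduct_mulVec, mulVec_mulVec, mulVec_mulVec]
  simp [Matrix.mul_assoc]

/-- Reduction mod 2. -/
abbrev m2 {d : ℕ} (B : Matrix (Fin d) (Fin d) ℤ) : Matrix (Fin d) (Fin d) (ZMod 2) :=
  B.map (Int.cast : ℤ → ZMod 2)

lemma m2_mul {d : ℕ} (A B : Matrix (Fin d) (Fin d) ℤ) : m2 (A * B) = m2 A * m2 B :=
  Matrix.map_mul (f := Int.castRingHom (ZMod 2))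

lemma m2_one {d : ℕ} : m2 (1 : Matrix (Fin d) (Fin d) ℤ) = 1 :=
  Matrix.map_one _ (by simp) (by simp)

/-- Elements of `Eset` indexed by `Option (Fin d)`. -/
def EE (d : ℕ) : Option (Fin d) → (Fin d → ZMod 2)
  | none => fun _ => 1
  | some p => Pi.single p 1

lemma range_EE (d : ℕ) : Set.range (EE d) = Eset d := by
  ext v
  constructor
  · rintro ⟨_ | p, rfl⟩
    · exact Or.inl rfl
    · exact Or.inr ⟨p, rfl⟩
  · rintro (rfl | ⟨p, rfl⟩)
    · exact ⟨none, rfl⟩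
    · exact ⟨some p, rfl⟩

lemma EE_inj (d : ℕ) (hd : 2 ≤ d) : Function.Injective (EE d) := by
  have key : ∀ p : Fin d, (fun _ => 1 : Fin d → ZMod 2) ≠ Pi.single p 1 := by
    intro p h
    have : Nontrivial (Fin d) := Fin.nontrivial_iff_two_le.2 hd
    obtain ⟨q, hq⟩ := exists_ne p
    have := congrFun h q
    rw [Pi.single_eq_of_ne hq] at this
    exact one_ne_zero this
  rintro (_ | p) (_ | q) h
  · rfl
  · exact absurd h (key q)
  · exact absurd h.symm (key p)
  · have := congrFun h p
    simp only [EE, Pi.single_eq_same] at this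
    by_contra hne
    have hpq : p ≠ q := fun h => hne (by rw [h])
    rw [Pi.single_eq_of_ne hpq] at this
    exact one_ne_zero this

lemma L_swap (d : ℕ) (p : Fin d) (i : Option (Fin d)) :
    m2 (L d p) *ᵥ EE d i = EE d (Equiv.swap none (some p) i) := by
  have hs : ∀ q, m2 (L d p) *ᵥ EE d (some q) = EE d (Equiv.swap none (some p) (some q)) := by
    intro q
    by_cases hq : q = p
    · subst hq
      rw [Equiv.swap_apply_right]
      funext r
      simp only [EE, mulVec_single, L]
      simp
    · rw [Equiv.swap_apply_of_ne_of_ne (by simp) (by simpa using hq)]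
      funext r
      simp [EE, L, hq, Pi.single_apply]
  rcases i with _ | q
  · rw [Equiv.swap_apply_left]
    funext r
    simp only [EE, mulVec, dotProduct, mul_one, Matrix.map_apply, L_apply]
    push_cast
    rw [Finset.sum_sub_distrib]
    simp [Pi.single_apply, Omega]
    by_cases hr : r = p
    · simp [hr]
    · rcases lt_or_gt_of_ne hr with h | h
      · simp [h, hr]
      · simp [h, hr, not_lt.2 h.le]
  · exact hs q

/-- The subgroup of the theorem, in terms of permutations. -/
def H (d : ℕ) : Subgroup (Matrix (Fin d) (Fin d) ℤ)ˣ where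
  carrier := {B | (B : Matrix (Fin d) (Fin d) ℤ).det = 1 ∧
    (∀ x y, om d ((B : Matrix (Fin d) (Fin d) ℤ)ᵀ *ᵥ x) ((B : Matrix (Fin d) (Fin d) ℤ)ᵀ *ᵥ y)
      = om d x y) ∧
    ∃ σ : Equiv.Perm (Option (Fin d)), ∀ i,
      m2 (B : Matrix (Fin d) (Fin d) ℤ) *ᵥ EE d i = EE d (σ i)}
  one_mem' := ⟨by simp, by simp, 1, fun i => by rw [Units.val_one, m2_one]; simp⟩
  mul_mem' := by
    rintro A B ⟨a1, a2, σ, a3⟩ ⟨b1, b2, τ, b3⟩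
    refine ⟨by simp [a1, b1], fun x y => ?_, σ * τ, fun i => ?_⟩
    · rw [Units.val_mul, transpose_mul, ← mulVec_mulVec, ← mulVec_mulVec, b2, a2]
    · rw [Units.val_mul, m2_mul, ← mulVec_mulVec, b3, a3]; rfl
  inv_mem' := by
    rintro A ⟨a1, a2, σ, a3⟩
    refine ⟨?_, fun x y => ?_, σ⁻¹, fun i => ?_⟩
    · have := congrArg Matrix.det (A.mul_inv)
      rwa [det_mul, a1, one_mul, det_one] at this
    · rw [← a2, mulVec_mulVec, mulVec_mulVec, ← transpose_mul, A.inv_mul]; simp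
    · have := a3 (σ⁻¹ i)
      rw [← Equiv.Perm.mul_apply, mul_inv_cancel, Equiv.Perm.one_apply] at this
      rw [← this, mulVec_mulVec, ← m2_mul, A.inv_mul, m2_one, one_mulVec]

lemma Gd_le_H (d : ℕ) : Gd d ≤ H d := by
  rw [Gd, Subgroup.closure_le]
  rintro u ⟨p, hp⟩
  refine ⟨by rw [hp, det_L], fun x y => ?_, Equiv.swap none (some p), fun i => by rw [hp, L_swap]⟩
  rw [hp, L_trans, L_trans, T_isom]

/-- Permutations realised by `Gd`. -/
def Pm (d : ℕ) : Subgroup (Equiv.Perm (Option (Fin d))) where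
  carrier := {σ | ∃ u ∈ Gd d, ∀ i, m2 (u : Matrix (Fin d) (Fin d) ℤ) *ᵥ EE d i = EE d (σ i)}
  one_mem' := ⟨1, (Gd d).one_mem, fun i => by rw [Units.val_one, m2_one]; simp⟩
  mul_mem' := by
    rintro σ τ ⟨A, ha, a3⟩ ⟨B, hb, b3⟩
    refine ⟨A * B, (Gd d).mul_mem ha hb, fun i => ?_⟩
    rw [Units.val_mul, m2_mul, ← mulVec_mulVec, b3, a3]; rfl
  inv_mem' := by
    rintro σ ⟨A, ha, a3⟩
    refine ⟨A⁻¹, (Gd d).inv_mem ha, fun i => ?_⟩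
    have := a3 (σ⁻¹ i)
    rw [← Equiv.Perm.mul_apply, mul_inv_cancel, Equiv.Perm.one_apply] at this
    rw [← this, mulVec_mulVec, ← m2_mul, A.inv_mul, m2_one, one_mulVec]

lemma Pm_top (d : ℕ) (σ : Equiv.Perm (Option (Fin d))) : σ ∈ Pm d := by
  have h0 : ∀ p, Equiv.swap none (some p) ∈ Pm d := fun p =>
    ⟨Lu d p, Lu_mem d p, fun i => by rw [Lu_val, L_swap]⟩
  have h1 : ∀ x y : Option (Fin d), x ≠ y → Equiv.swap x y ∈ Pm d := by
    rintro (_ | p) (_ | q) h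
    · exact absurd rfl h
    · exact h0 q
    · rw [Equiv.swap_comm]; exact h0 p
    · have := Equiv.swap_mul_swap_mul_swap (x := some q) (y := none) (z := some p) (by simp) h.symm
      rw [← this]
      refine (Pm d).mul_mem ((Pm d).mul_mem (h0 p) ?_) (h0 p)
      rw [Equiv.swap_comm]; exact h0 q
  induction σ using Equiv.Perm.swap_induction_on with
  | one => exact (Pm d).one_mem
  | swap_mul f x y hxy ih => exact (Pm d).mul_mem (h1 x y hxy) ih

lemma H_le_Gd (d : ℕ) : H d ≤ Gd d := by
  rintro B ⟨b1, b2, σ, b3⟩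
  obtain ⟨g, hg, h3⟩ := Pm_top d σ
  have hC : g⁻¹ * B ∈ H d := (H d).mul_mem ((H d).inv_mem (Gd_le_H d hg)) ⟨b1, b2, σ, b3⟩
  have hC3 : ∀ i, m2 ((g⁻¹ * B : (Matrix (Fin d) (Fin d) ℤ)ˣ) : Matrix (Fin d) (Fin d) ℤ) *ᵥ EE d i
      = EE d i := by
    intro i
    rw [Units.val_mul, m2_mul, ← mulVec_mulVec, b3, ← h3, mulVec_mulVec, ← m2_mul, g.inv_mul,
      m2_one, one_mulVec]
  suffices h : g⁻¹ * B ∈ Gd d by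
    have := (Gd d).mul_mem hg h
    rwa [mul_inv_cancel_left] at this
  generalize g⁻¹ * B = C at hC hC3
  obtain ⟨c1, c2, -⟩ := hC
  have hz : ∀ r q, ∃ z : ℤ, (C : Matrix (Fin d) (Fin d) ℤ) r q = (if r = q then 1 else 0) + 2 * z := by
    intro r q
    have := congrFun (hC3 (some q)) r
    have h' : (((C : Matrix (Fin d) (Fin d) ℤ) r q - (if r = q then 1 else 0) : ℤ) : ZMod 2) = 0 := by
      simp only [EE, mulVec_single, Pi.single_apply] at this
      simp at this
      push_cast
      rw [this, sub_self]
    rw [ZMod.intCast_zmod_eq_zero_iff_dvd] at h'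
    obtain ⟨z, hz⟩ := h'
    exact ⟨z, by push_cast at hz; linarith⟩
  choose Z hZ using hz
  obtain ⟨φ, hφ, h⟩ := level_two d (Matrix.toLin' (C : Matrix (Fin d) (Fin d) ℤ)ᵀ)
    (fun x y => c2 x y) (by rw [LinearMap.det_toLin', det_transpose, c1]) (fun x => by
      refine ⟨(Matrix.of Z)ᵀ *ᵥ x, ?_⟩
      funext i
      simp only [toLin'_apply, mulVec, dotProduct, transpose_apply, hZ, Pi.add_apply, Pi.smul_apply,
        smul_eq_mul, Matrix.of_apply, add_mul, Finset.sum_add_distrib, Finset.mul_sum]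
      simp [mul_assoc])
  obtain ⟨u, hu, hu'⟩ := N_le_Dual d hφ
  have : C = u := by
    apply Units.ext
    apply Matrix.transpose_injective
    apply Matrix.toLin'.injective
    refine LinearMap.ext fun x => ?_
    rw [← h, ← hu']; rfl
  rw [this]; exact hu

lemma final (d : ℕ) (hd : 2 ≤ d) (B : (Matrix (Fin d) (Fin d) ℤ)ˣ)
    (h : (fun v => ((B : Matrix (Fin d) (Fin d) ℤ).map (Int.cast : ℤ → ZMod 2)).mulVec v) ''
            Eset d = Eset d) : ∃ σ : Equiv.Perm (Option (Fin d)), ∀ i,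
      m2 (B : Matrix (Fin d) (Fin d) ℤ) *ᵥ EE d i = EE d (σ i) := by
  have hx : ∀ i, ∃ j, EE d j = m2 (B : Matrix (Fin d) (Fin d) ℤ) *ᵥ EE d i := by
    intro i
    have : m2 (B : Matrix (Fin d) (Fin d) ℤ) *ᵥ EE d i ∈ Eset d := by
      rw [← h]
      exact ⟨EE d i, by rw [← range_EE]; exact ⟨i, rfl⟩, rfl⟩
    rwa [← range_EE] at this
  choose s hs using hx
  have hinj : Function.Injective s := by
    intro i j hij
    have : m2 (B : Matrix (Fin d) (Fin d) ℤ) *ᵥ EE d i = m2 (B : Matrix (Fin d) (Fin d) ℤ) *ᵥ EE d j := by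
      rw [← hs, ← hs, hij]
    have := congrArg (fun v => m2 ((B⁻¹ : (Matrix (Fin d) (Fin d) ℤ)ˣ) : Matrix (Fin d) (Fin d) ℤ) *ᵥ v) this
    simp only [mulVec_mulVec, ← m2_mul, B.inv_mul, m2_one, one_mulVec] at this
    exact EE_inj d hd this
  exact ⟨Equiv.ofBijective s (Finite.injective_iff_bijective.1 hinj), fun i => (hs i).symm⟩

lemma final' (d : ℕ) (B : (Matrix (Fin d) (Fin d) ℤ)ˣ)
    (h : ∃ σ : Equiv.Perm (Option (Fin d)), ∀ i,
      m2 (B : Matrix (Fin d) (Fin d) ℤ) *ᵥ EE d i = EE d (σ i)) :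
    (fun v => ((B : Matrix (Fin d) (Fin d) ℤ).map (Int.cast : ℤ → ZMod 2)).mulVec v) ''
            Eset d = Eset d := by
  obtain ⟨σ, h⟩ := h
  rw [← range_EE, ← Set.range_comp]
  have : (fun v => ((B : Matrix (Fin d) (Fin d) ℤ).map (Int.cast : ℤ → ZMod 2)).mulVec v) ∘ EE d
      = EE d ∘ σ := funext h
  rw [this, σ.surjective.range_comp]

end GdProof

/-- The hyperelliptic Rauzy–Veech group `G_d` equals the group of all
`B ∈ SL(ℤ^{A_d})` with `B Ω Bᵀ = Ω` whose mod-2 reduction preserves the set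
`E = {ē*} ∪ {ē_p}`. -/
theorem Gd_eq (d : ℕ) (hd : 2 ≤ d) :
    ((Gd d : Subgroup (Matrix (Fin d) (Fin d) ℤ)ˣ) : Set (Matrix (Fin d) (Fin d) ℤ)ˣ) =
      {B : (Matrix (Fin d) (Fin d) ℤ)ˣ |
        (B : Matrix (Fin d) (Fin d) ℤ).det = 1 ∧
        (B : Matrix (Fin d) (Fin d) ℤ) * Omega d * (B : Matrix (Fin d) (Fin d) ℤ)ᵀ = Omega d ∧
        (fun v => ((B : Matrix (Fin d) (Fin d) ℤ).map (Int.cast : ℤ → ZMod 2)).mulVec v) ''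
            Eset d = Eset d} := by
  ext B
  constructor
  · intro hB
    obtain ⟨h1, h2, h3⟩ := GdProof.Gd_le_H d hB
    exact ⟨h1, GdProof.of_isom d _ h2, GdProof.final' d B h3⟩
  · rintro ⟨h1, h2, h3⟩
    exact GdProof.H_le_Gd d ⟨h1, GdProof.isom_of d _ h2, GdProof.final d hd B h3⟩
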